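/- There exist near Williamson matrices of order 59; that is, there exist a 59×59 circulant (-1,1)-matrix A and three 59×59 symmetric circulant (-1,1)-matrices B, C, D such that AAᵀ + BBᵀ + CCᵀ + DDᵀ = 236·I. -/

import Mathlib

open Matrix

/-- `X` is circulant: `x_{ij} = x_{0, j-i}` with indices mod `n`. -/
def IsCirculant {n : ℕ} {α : Type*} (X : Matrix (ZMod n) (ZMod n) α) : Prop :=
  ∀ i j, X i j = X 0 (j - i)

/-- `X` is a `(-1,1)`-matrix. -/
def IsPM1 {n : ℕ} (X : Matrix (ZMod n) (ZMod n) ℝ) : Prop :=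
  ∀ i j, X i j = 1 ∨ X i j = -1

/-!
The Gram matrix of the circulant matrix generated by `v` is the circulant matrix generated by the
periodic autocorrelation of `v`. If `v` is the `±1` sequence equal to `-1` exactly on `S ⊆ ZMod n`,
then expanding `v = 1 - 2 · 1_S` gives its autocorrelation at `s` as `n - 4|S| + 4 λ_S(s)`, where
`λ_S(s)` counts the representations of `s` as a difference of elements of `S`. Hence four subsets of
`ZMod n`, the last three of them symmetric, yield near Williamson matrices as soon as they are
supplementary difference sets with `λ = |S| + |T| + |U| + |V| - n`. For `n = 59` we exhibit such
sets of sizes `25, 25, 27, 26`, with `λ = 44`. The corresponding row sums `9, 9, 5, 7` satisfy the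
necessary condition `9² + 9² + 5² + 7² = 4 · 59`.
-/

open scoped Finset Pointwise

section Autocorrelation

variable {G R : Type*} [AddGroup G] [Fintype G] [NonUnitalNonAssocSemiring R]

/-- The periodic autocorrelation `s ↦ ∑ k, v (s + k) * v k` of a sequence `v` indexed by a finite
group; it generates the Gram matrix of the circulant matrix of `v`. -/
def autocorrelation (v : G → R) (s : G) : R :=
  ∑ k, v (s + k) * v k

theorem circulant_mul_transpose_self (v : G → R) :
    circulant v * (circulant v)ᵀ = circulant (autocorrelation v) := by
  ext i j
  calc (circulant v * (circulant v)ᵀ) i j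
      = ∑ k, v (i - k) * v (j - k) := by simp only [mul_apply, transpose_apply, circulant_apply]
    _ = ∑ k, v (i - j + (j - k)) * v (j - k) := by simp only [sub_add_sub_cancel]
    _ = autocorrelation v (i - j) :=
        (Equiv.subLeft j).sum_comp fun k ↦ v (i - j + k) * v k

end Autocorrelation

section SignSequence

variable {G : Type*} [DecidableEq G]

/-- The `±1` sequence with values in `R` that is `-1` exactly on `S`. -/
def signSequence (R : Type*) [One R] [Neg R] (S : Finset G) (k : G) : R :=
  if k ∈ S then -1 else 1

theorem signSequence_eq_one_or_neg_one (R : Type*) [One R] [Neg R] (S : Finset G) (k : G) :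
    signSequence R S k = 1 ∨ signSequence R S k = -1 :=
  (ite_eq_or_eq _ _ _).symm

theorem signSequence_neg (R : Type*) [One R] [Neg R] [InvolutiveNeg G] {S : Finset G}
    (hS : -S = S) (k : G) : signSequence R S (-k) = signSequence R S k := by
  simp only [signSequence, ← Finset.mem_neg', hS]

/-- The number of representations of `s` as a difference of two elements of `S`, each counted by its
subtrahend `k`. -/
def differenceCount [Add G] (S : Finset G) (s : G) : ℕ :=
  #{k ∈ S | s + k ∈ S}

theorem differenceCount_zero [AddZeroClass G] (S : Finset G) : differenceCount S 0 = #S := by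
  simp [differenceCount]

theorem autocorrelation_signSequence (R : Type*) [Ring R] [AddGroup G] [Fintype G]
    (S : Finset G) (s : G) :
    autocorrelation (signSequence R S) s =
      Fintype.card G - 4 * #S + 4 * differenceCount S s := by
  have sum_indicator : ∑ k, (if k ∈ S then 1 else 0 : R) = #S := by simp
  have sum_indicator_shift : ∑ k, (if s + k ∈ S then 1 else 0 : R) = #S :=
    (Equiv.sum_comp (Equiv.addLeft s) fun k ↦ (if k ∈ S then 1 else 0 : R)).trans sum_indicator
  have sum_indicator_both :
      ∑ k, (if k ∈ S ∧ s + k ∈ S then 1 else 0 : R) = differenceCount S s := by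
    rw [Finset.sum_boole, differenceCount, ← Finset.filter_filter, Finset.filter_univ_mem]
  have expand (k : G) : signSequence R S (s + k) * signSequence R S k =
      1 - 2 * (if s + k ∈ S then 1 else 0) - 2 * (if k ∈ S then 1 else 0) +
        4 * (if k ∈ S ∧ s + k ∈ S then 1 else 0) := by
    by_cases hk : k ∈ S <;> by_cases hsk : s + k ∈ S <;> norm_num [signSequence, hk, hsk]
  simp only [autocorrelation, expand, Finset.sum_add_distrib, Finset.sum_sub_distrib,
    ← Finset.mul_sum, sum_indicator, sum_indicator_shift, sum_indicator_both, Finset.sum_const,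
    Finset.card_univ, nsmul_one]
  noncomm_ring

/-- The subsets `S, T, U, V` of `G` are supplementary difference sets with parameter `l`: every
nonzero element of `G` has, over the four sets in total, exactly `l` representations as a difference
of two elements of the same set. -/
def IsSupplementaryDifferenceSets [AddZeroClass G] (S T U V : Finset G) (l : ℕ) : Prop :=
  ∀ s ≠ 0, differenceCount S s + differenceCount T s + differenceCount U s +
    differenceCount V s = l

theorem IsSupplementaryDifferenceSets.sum_circulant_mul_transpose (R : Type*) [Ring R]
    [AddGroup G] [Fintype G] {S T U V : Finset G} {l : ℕ}
    (h : IsSupplementaryDifferenceSets S T U V l)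
    (hl : l + Fintype.card G = #S + #T + #U + #V) :
    circulant (signSequence R S) * (circulant (signSequence R S))ᵀ +
      circulant (signSequence R T) * (circulant (signSequence R T))ᵀ +
      circulant (signSequence R U) * (circulant (signSequence R U))ᵀ +
      circulant (signSequence R V) * (circulant (signSequence R V))ᵀ =
    (4 * Fintype.card G : R) • 1 := by
  simp only [circulant_mul_transpose_self, ← circulant_add]
  rw [smul_one_eq_diagonal, ← scalar_apply, ← circulant_single]
  congr 1
  ext s
  simp only [Pi.add_apply, autocorrelation_signSequence]
  obtain rfl | hs := eq_or_ne s 0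
  · simp only [differenceCount_zero, Pi.single_eq_same]
    noncomm_ring
  · have hcount : (differenceCount S s + differenceCount T s + differenceCount U s +
        differenceCount V s + Fintype.card G : R) = #S + #T + #U + #V :=
      mod_cast congrArg (Nat.cast (R := R)) ((congrArg (· + Fintype.card G) (h s hs)).trans hl)
    rw [Pi.single_eq_of_ne hs]
    linear_combination (norm := noncomm_ring) 4 * hcount

end SignSequence

section NearWilliamson

variable {n : ℕ}

theorem isCirculant_circulant {α : Type*} (v : ZMod n → α) : IsCirculant (circulant v) := by
  intro i j
  simp only [circulant_apply, zero_sub, neg_sub]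

theorem isPM1_circulant_signSequence (S : Finset (ZMod n)) :
    IsPM1 (circulant (signSequence ℝ S)) :=
  fun i j ↦ signSequence_eq_one_or_neg_one ℝ S (i - j)

theorem exists_nearWilliamson_of_isSupplementaryDifferenceSets [NeZero n]
    {S T U V : Finset (ZMod n)} {l : ℕ} (h : IsSupplementaryDifferenceSets S T U V l)
    (hl : l + n = #S + #T + #U + #V) (hT : -T = T) (hU : -U = U) (hV : -V = V) :
    ∃ A B C D : Matrix (ZMod n) (ZMod n) ℝ,
      IsPM1 A ∧ IsPM1 B ∧ IsPM1 C ∧ IsPM1 D ∧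
      IsCirculant A ∧ IsCirculant B ∧ IsCirculant C ∧ IsCirculant D ∧
      B.IsSymm ∧ C.IsSymm ∧ D.IsSymm ∧
      A * Aᵀ + B * Bᵀ + C * Cᵀ + D * Dᵀ = (4 * n : ℝ) • 1 := by
  refine ⟨circulant (signSequence ℝ S), circulant (signSequence ℝ T),
    circulant (signSequence ℝ U), circulant (signSequence ℝ V),
    isPM1_circulant_signSequence S, isPM1_circulant_signSequence T,
    isPM1_circulant_signSequence U, isPM1_circulant_signSequence V,
    isCirculant_circulant _, isCirculant_circulant _, isCirculant_circulant _,
    isCirculant_circulant _, circulant_isSymm_iff.2 (signSequence_neg ℝ hT),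
    circulant_isSymm_iff.2 (signSequence_neg ℝ hU),
    circulant_isSymm_iff.2 (signSequence_neg ℝ hV), ?_⟩
  simpa only [ZMod.card] using h.sum_circulant_mul_transpose ℝ (by rwa [ZMod.card])

end NearWilliamson

section Order59

/-- The positions of `-1` in the circulant, not necessarily symmetric, matrix `A` of order 59. -/
def negSupportA : Finset (ZMod 59) :=
  {0, 1, 2, 3, 6, 8, 16, 17, 19, 20, 23, 24, 30, 31, 33, 35, 36, 42, 44, 45, 48, 52, 54, 56, 57}

/-- The positions of `-1` in the symmetric matrix `B` of order 59. -/
def negSupportB : Finset (ZMod 59) :=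
  {0, 1, 2, 5, 9, 11, 18, 19, 21, 23, 24, 26, 27,
    -1, -2, -5, -9, -11, -18, -19, -21, -23, -24, -26, -27}

/-- The positions of `-1` in the symmetric matrix `C` of order 59. -/
def negSupportC : Finset (ZMod 59) :=
  {0, 2, 3, 4, 7, 9, 10, 11, 14, 15, 17, 19, 20, 29,
    -2, -3, -4, -7, -9, -10, -11, -14, -15, -17, -19, -20, -29}

/-- The positions of `-1` in the symmetric matrix `D` of order 59. -/
def negSupportD : Finset (ZMod 59) :=
  {1, 3, 4, 5, 6, 10, 11, 17, 19, 21, 22, 25, 29,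
    -1, -3, -4, -5, -6, -10, -11, -17, -19, -21, -22, -25, -29}

theorem isSupplementaryDifferenceSets_negSupport :
    IsSupplementaryDifferenceSets negSupportA negSupportB negSupportC negSupportD 44 := by
  unfold IsSupplementaryDifferenceSets
  decide +kernel

theorem card_negSupportA : #negSupportA = 25 := by decide

theorem card_negSupportB : #negSupportB = 25 := by decide

theorem card_negSupportC : #negSupportC = 27 := by decide

theorem card_negSupportD : #negSupportD = 26 := by decide

theorem neg_negSupportB : -negSupportB = negSupportB := by decide

theorem neg_negSupportC : -negSupportC = negSupportC := by decide

theorem neg_negSupportD : -negSupportD = negSupportD := by decide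

end Order59

/-- There exist near Williamson matrices of order 59: a circulant
`(-1,1)`-matrix `A` and symmetric circulant `(-1,1)`-matrices `B, C, D` of order
59 with `AAᵀ + BBᵀ + CCᵀ + DDᵀ = 236·I`. -/
theorem exists_nearWilliamson_59 :
    ∃ A B C D : Matrix (ZMod 59) (ZMod 59) ℝ,
      IsPM1 A ∧ IsPM1 B ∧ IsPM1 C ∧ IsPM1 D ∧
      IsCirculant A ∧ IsCirculant B ∧ IsCirculant C ∧ IsCirculant D ∧
      B.IsSymm ∧ C.IsSymm ∧ D.IsSymm ∧
      A * Aᵀ + B * Bᵀ + C * Cᵀ + D * Dᵀ = (236 : ℝ) • 1 := by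
  have four_mul_order : (236 : ℝ) = 4 * (59 : ℕ) := by norm_num
  have card_add : 44 + 59 = #negSupportA + #negSupportB + #negSupportC + #negSupportD := by
    rw [card_negSupportA, card_negSupportB, card_negSupportC, card_negSupportD]
  rw [four_mul_order]
  exact exists_nearWilliamson_of_isSupplementaryDifferenceSets
    isSupplementaryDifferenceSets_negSupport card_add
    neg_negSupportB neg_negSupportC neg_negSupportD
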